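/- arXiv:2010.15169 — 3 statements merged into one kernel-verified Lean document; each statement's English description precedes it below -/
import Mathlib

section
/- Let P_GF, P_GB, σ², α, y, z, λ_GF, λ_GB > 0, and let H_GF, H_GB be independent exponential random variables with means λ_GF and λ_GB. Set g_GF = P_GF·H_GF·y^{-α}, g_GB = P_GB·H_GB·z^{-α}, Ψ(t) = P_GF·y^{-α}·t·z^α/(λ_GB·P_GB) + 1/λ_GF, and c = σ²·y^α/P_GF. Then for every t > 0, P( g_GB > t·(g_GF + σ²) and g_GF < σ² ) = exp( - t·σ²·z^α/(λ_GB·P_GB) ) · (1 - e^{-Ψ(t)·c}) / (λ_GF·Ψ(t)). -/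
open MeasureTheory ProbabilityTheory Real Set

lemma law_exp_aux {Ω : Type*} [MeasurableSpace Ω] (μ : Measure Ω) [IsProbabilityMeasure μ]
    (H : Ω → ℝ) (hm : Measurable H) (l : ℝ) (hl : 0 < l)
    (h : ∀ s : ℝ, 0 ≤ s → (μ {ω | s < H ω}).toReal = Real.exp (-s / l)) :
    μ.map H = expMeasure (1 / l) := by
  have hr : 0 < 1 / l := by positivity
  have := isProbabilityMeasure_expMeasure hr
  have : IsProbabilityMeasure (μ.map H) := Measure.isProbabilityMeasure_map hm.aemeasurable
  have key : ∀ s : ℝ, 0 ≤ s → (μ.map H).real (Iic s) = 1 - Real.exp (-s / l) := by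
    intro s hs
    have h1 : (μ.map H).real (Ioi s) = Real.exp (-s / l) := by
      rw [← h s hs, measureReal_def, Measure.map_apply hm measurableSet_Ioi]; rfl
    rw [← h1, ← compl_Ioi, probReal_compl_eq_one_sub measurableSet_Ioi]
  apply Measure.eq_of_cdf
  ext x
  rw [cdf_expMeasure_eq hr, cdf_eq_real]
  split_ifs with hx
  · rw [key x hx]; congr 2; ring
  · have h0 : (μ.map H).real (Iic 0) = 0 := by rw [key 0 le_rfl]; simp
    apply le_antisymm _ measureReal_nonneg
    rw [← h0]
    exact measureReal_mono (Iic_subset_Iic.2 (not_le.1 hx).le)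

lemma integral_exp_aux (p c : ℝ) (hp : 0 < p) :
    ∫ x in (0:ℝ)..c, Real.exp (-(p * x)) = (1 - Real.exp (-(p * c))) / p := by
  have hd : ∀ x ∈ uIcc 0 c, HasDerivAt (fun x => -Real.exp (-(p * x)) / p)
      (Real.exp (-(p * x))) x := by
    intro x _
    have := ((((hasDerivAt_id x).const_mul p).neg).exp.neg).div_const p
    refine HasDerivAt.congr_deriv this ?_
    simp only [id_eq, Pi.neg_apply, mul_one]
    field_simp
  rw [intervalIntegral.integral_eq_sub_of_hasDerivAt hd
    (by apply Continuous.intervalIntegrable; fun_prop)]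
  simp; ring

lemma core_aux {Ω : Type*} [MeasurableSpace Ω] (μ : Measure Ω) [IsProbabilityMeasure μ]
    (X Y : Ω → ℝ) (hX : Measurable X) (hY : Measurable Y) (hind : IndepFun X Y μ)
    (l m a b c : ℝ) (hl : 0 < l) (hm : 0 < m) (ha : 0 < a) (hb : 0 < b) (hc : 0 < c)
    (hXe : ∀ s : ℝ, 0 ≤ s → (μ {ω | s < X ω}).toReal = Real.exp (-s / l))
    (hYe : ∀ s : ℝ, 0 ≤ s → (μ {ω | s < Y ω}).toReal = Real.exp (-s / m)) :
    (μ {ω | a * X ω + b < Y ω ∧ X ω < c}).toReal =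
      Real.exp (-b / m) * (1 - Real.exp (-((a / m + 1 / l) * c))) / (l * (a / m + 1 / l)) := by
  have hp : 0 < a / m + 1 / l := by positivity
  set p := a / m + 1 / l with hpdef
  have : IsProbabilityMeasure (μ.map Y) := Measure.isProbabilityMeasure_map hY.aemeasurable
  have hprod := (indepFun_iff_map_prod_eq_prod_map_map hX.aemeasurable hY.aemeasurable).1 hind
  have hS : MeasurableSet {q : ℝ × ℝ | a * q.1 + b < q.2 ∧ q.1 < c} :=
    MeasurableSet.inter
      (measurableSet_lt (f := fun q : ℝ × ℝ => a * q.1 + b) (g := fun q => q.2)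
        (by fun_prop) (by fun_prop))
      (measurableSet_lt (f := fun q : ℝ × ℝ => q.1) (g := fun _ => c)
        (by fun_prop) (by fun_prop))
  have e1 : μ {ω | a * X ω + b < Y ω ∧ X ω < c} =
      ((μ.map X).prod (μ.map Y)) {q : ℝ × ℝ | a * q.1 + b < q.2 ∧ q.1 < c} := by
    rw [← hprod, Measure.map_apply (hX.prodMk hY) hS]; rfl
  have hYi : ∀ s : ℝ, 0 ≤ s → μ.map Y (Ioi s) = ENNReal.ofReal (Real.exp (-s / m)) := by
    intro s hs
    rw [← hYe s hs, ENNReal.ofReal_toReal (measure_ne_top _ _),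
      Measure.map_apply hY measurableSet_Ioi]; rfl
  have e2 : μ {ω | a * X ω + b < Y ω ∧ X ω < c} =
      ∫⁻ x in Ico 0 c, ENNReal.ofReal (Real.exp (-b / m) / l * Real.exp (-(p * x))) := by
    rw [e1, Measure.prod_apply hS, law_exp_aux μ X hX l hl hXe]
    unfold expMeasure gammaMeasure
    rw [lintegral_withDensity_eq_lintegral_mul _
      (show Measurable (gammaPDF 1 (1 / l)) from
        (measurable_gammaPDFReal 1 (1 / l)).ennreal_ofReal)
      (measurable_measure_prodMk_left hS), ← lintegral_indicator measurableSet_Ico]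
    congr 1
    ext x
    rw [Pi.mul_apply]
    change exponentialPDF (1 / l) x * _ = _
    by_cases hx : 0 ≤ x
    · by_cases hxc : x < c
      · rw [indicator_of_mem (show x ∈ Ico 0 c from ⟨hx, hxc⟩), exponentialPDF_of_nonneg hx]
        have : (Prod.mk x ⁻¹' {q : ℝ × ℝ | a * q.1 + b < q.2 ∧ q.1 < c}) = Ioi (a * x + b) := by
          ext w; simp [hxc]
        rw [this, hYi _ (by positivity), ← ENNReal.ofReal_mul (by positivity), mul_assoc,
          ← Real.exp_add, div_mul_eq_mul_div (Real.exp (-b / m)), ← Real.exp_add,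
          one_div_mul_eq_div]
        congr 3
        rw [hpdef]; ring
      · have : (Prod.mk x ⁻¹' {q : ℝ × ℝ | a * q.1 + b < q.2 ∧ q.1 < c}) = ∅ := by
          ext w; simp [hxc]
        rw [this, indicator_of_notMem (fun h => hxc h.2)]; simp
    · rw [exponentialPDF_of_neg (not_le.1 hx), indicator_of_notMem (fun h => hx h.1), zero_mul]
  rw [e2, ← integral_eq_lintegral_of_nonneg_ae (Filter.Eventually.of_forall
    (fun x => by positivity)) (by fun_prop), integral_Ico_eq_integral_Ioc,
    ← intervalIntegral.integral_of_le hc.le, intervalIntegral.integral_const_mul,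
    integral_exp_aux p c hp]
  field_simp


/-- Inner x-integral of the first term of (B.1) in the proof of Lemma 2:
with independent exponential channel gains `H_GF, H_GB` (means `lamGF, lamGB`),
`g_GF = P_GF·H_GF·y⁻ᵅ`, `g_GB = P_GB·H_GB·z⁻ᵅ`, `Ψ(t) = P_GF·y⁻ᵅ·t·zᵅ/(lamGB·P_GB) + 1/lamGF`
and `c = σ²·yᵅ/P_GF`, for every `t > 0`,
`P(g_GB > t·(g_GF + σ²) ∧ g_GF < σ²)
  = exp(-t·σ²·zᵅ/(lamGB·P_GB)) · (1 - e^{-Ψ(t)·c}) / (lamGF·Ψ(t))`. -/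
theorem gb_truncated_coverage
    {Ω : Type*} [MeasurableSpace Ω] (μ : Measure Ω) [IsProbabilityMeasure μ]
    (P_GF P_GB σ2 α y z lamGF lamGB : ℝ)
    (hPGF : 0 < P_GF) (hPGB : 0 < P_GB) (hσ2 : 0 < σ2) (hα : 0 < α)
    (hy : 0 < y) (hz : 0 < z) (hlamGF : 0 < lamGF) (hlamGB : 0 < lamGB)
    (H_GF H_GB : Ω → ℝ) (hmGF : Measurable H_GF) (hmGB : Measurable H_GB)
    (hind : IndepFun H_GF H_GB μ)
    (hGFexp : ∀ s : ℝ, 0 ≤ s → (μ {ω | s < H_GF ω}).toReal = Real.exp (-s / lamGF))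
    (hGBexp : ∀ s : ℝ, 0 ≤ s → (μ {ω | s < H_GB ω}).toReal = Real.exp (-s / lamGB))
    (Ψ : ℝ → ℝ) (hΨ : ∀ t, Ψ t = P_GF * y ^ (-α) * t * z ^ α / (lamGB * P_GB) + 1 / lamGF)
    (c : ℝ) (hc : c = σ2 * y ^ α / P_GF)
    (t : ℝ) (ht : 0 < t) :
    (μ {ω | t * (P_GF * H_GF ω * y ^ (-α) + σ2) < P_GB * H_GB ω * z ^ (-α)
          ∧ P_GF * H_GF ω * y ^ (-α) < σ2}).toReal
      = Real.exp (-(t * σ2 * z ^ α) / (lamGB * P_GB)) *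
          (1 - Real.exp (-(Ψ t * c))) / (lamGF * Ψ t) := by
  have hyp : 0 < y ^ α := Real.rpow_pos_of_pos hy α
  have hzp : 0 < z ^ α := Real.rpow_pos_of_pos hz α
  have hset : {ω | t * (P_GF * H_GF ω * y ^ (-α) + σ2) < P_GB * H_GB ω * z ^ (-α)
          ∧ P_GF * H_GF ω * y ^ (-α) < σ2} =
      {ω | (t * P_GF * z ^ α / (y ^ α * P_GB)) * H_GF ω + t * σ2 * z ^ α / P_GB < H_GB ω
          ∧ H_GF ω < c} := by
    ext ω
    simp only [mem_ofPred_eq]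
    rw [Real.rpow_neg hy.le, Real.rpow_neg hz.le, hc]
    refine and_congr ?_ ?_
    · rw [← div_eq_mul_inv _ (z ^ α), lt_div_iff₀ hzp, ← mul_lt_mul_iff_right₀ hPGB]
      have : P_GB * (t * P_GF * z ^ α / (y ^ α * P_GB) * H_GF ω + t * σ2 * z ^ α / P_GB)
          = t * (P_GF * H_GF ω * (y ^ α)⁻¹ + σ2) * z ^ α := by
        field_simp
      rw [← this, mul_lt_mul_iff_right₀ hPGB, mul_lt_mul_iff_right₀ hPGB]
    · rw [← div_eq_mul_inv, div_lt_iff₀ hyp, lt_div_iff₀ hPGF, mul_comm]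
  have hPsi : Ψ t = (t * P_GF * z ^ α / (y ^ α * P_GB)) / lamGB + 1 / lamGF := by
    rw [hΨ, Real.rpow_neg hy.le]
    field_simp
  rw [hset, hPsi, core_aux μ H_GF H_GB hmGF hmGB hind lamGF lamGB _ _ c hlamGF hlamGB
    (by positivity) (by positivity) (by rw [hc]; positivity) hGFexp hGBexp]
  congr 3
  field_simp
end

section
/- Fix σ², α, y, z, λ_GF, λ_GB, P_GB, γ > 0, and for P > 0 set Ψ(P) = P·y^{-α}·γ·z^α/(λ_GB·P_GB) + 1/λ_GF and b(P) = Ψ(P)·σ²·y^α/P. Then the conditional GF ergodic rate R(P) := -( 1/(ln 2 · λ_GF · Ψ(P)) ) · exp( -γ·σ²·z^α/(λ_GB·P_GB) ) · e^{b(P)} · Ei(-b(P)) tends to 0 as P → ∞, where Ei(-b) = ∫_{-∞}^{-b} e^u/u du. -/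
open MeasureTheory Real Set Filter

lemma ei_aux (t : ℝ) (ht : 0 < t) :
    ‖Real.exp t * ∫ u in Set.Iio (-t), Real.exp u / u‖ ≤ 1 / t := by
  have hint : IntegrableOn (fun u : ℝ => Real.exp u * (1 / t)) (Set.Iio (-t)) :=
    ((integrableOn_exp_Iic (-t)).mono_set Set.Iio_subset_Iic_self).mul_const _
  have h1 : ‖∫ u in Set.Iio (-t), Real.exp u / u‖
      ≤ ∫ u in Set.Iio (-t), Real.exp u * (1 / t) := by
    apply norm_integral_le_of_norm_le hint
    refine (ae_restrict_iff' measurableSet_Iio).2 (Eventually.of_forall fun u hu => ?_)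
    have hu' : u < -t := hu
    rw [norm_div, Real.norm_eq_abs, Real.norm_eq_abs, abs_of_pos (Real.exp_pos u),
      abs_of_neg (by linarith), div_eq_mul_one_div]
    gcongr
    linarith
  rw [integral_mul_const, ← integral_Iic_eq_integral_Iio (f := Real.exp), integral_exp_Iic] at h1
  rw [norm_mul, Real.norm_eq_abs, abs_of_pos (Real.exp_pos t)]
  calc _ ≤ Real.exp t * (Real.exp (-t) * (1 / t)) := by gcongr
    _ = 1 / t := by rw [← mul_assoc, ← Real.exp_add]; simp

/-- Remark 2 / Fig. 2: the exact conditional (on distances `y, z`) ergodic rate of the GF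
user from Theorem 2, viewed as a function `R(P)` of the GF transmit power `P` with
`Ψ(P) = P·y⁻ᵅ·γ·zᵅ/(lamGB·P_GB) + 1/lamGF` and `b(P) = Ψ(P)·σ²·yᵅ/P`, tends to `0`
as `P → ∞`, where `Ei(-b) = ∫_{-∞}^{-b} e^u/u du`. -/
theorem gf_conditional_rate_tendsto_zero
    (σ2 α y z lamGF lamGB P_GB γ : ℝ)
    (hσ2 : 0 < σ2) (hα : 0 < α) (hy : 0 < y) (hz : 0 < z)
    (hlamGF : 0 < lamGF) (hlamGB : 0 < lamGB) (hPGB : 0 < P_GB) (hγ : 0 < γ)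
    (Ψ : ℝ → ℝ) (hΨ : ∀ P, Ψ P = P * y ^ (-α) * γ * z ^ α / (lamGB * P_GB) + 1 / lamGF)
    (b : ℝ → ℝ) (hb : ∀ P, b P = Ψ P * σ2 * y ^ α / P) :
    Filter.Tendsto
      (fun P : ℝ =>
        -(1 / (Real.log 2 * lamGF * Ψ P)) *
          Real.exp (-(γ * σ2 * z ^ α) / (lamGB * P_GB)) * Real.exp (b P) *
          ∫ u in Set.Iio (-(b P)), Real.exp u / u)
      Filter.atTop (nhds 0) := by
  have hyp : 0 < y ^ (-α) := Real.rpow_pos_of_pos hy _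
  have hya : 0 < y ^ α := Real.rpow_pos_of_pos hy _
  have hza : 0 < z ^ α := Real.rpow_pos_of_pos hz _
  have hlog : 0 < Real.log 2 := Real.log_pos (by norm_num)
  obtain ⟨k, hk⟩ : ∃ k, k = y ^ (-α) * γ * z ^ α / (lamGB * P_GB) := ⟨_, rfl⟩
  have hk0 : 0 < k := by rw [hk]; positivity
  have hΨ' : ∀ P, Ψ P = k * P + 1 / lamGF := by
    intro P; rw [hΨ, hk]; ring
  have hΨt : Tendsto Ψ atTop atTop := by
    have : Ψ = fun P => k * P + 1 / lamGF := funext hΨ'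
    rw [this]
    exact tendsto_atTop_add_const_right _ _ (tendsto_id.const_mul_atTop hk0)
  have hA : Tendsto (fun P => -(1 / (Real.log 2 * lamGF * Ψ P)) *
      Real.exp (-(γ * σ2 * z ^ α) / (lamGB * P_GB))) atTop (nhds 0) := by
    have h1 : Tendsto (fun P => (Real.log 2 * lamGF * Ψ P)⁻¹) atTop (nhds 0) :=
      tendsto_inv_atTop_zero.comp (hΨt.const_mul_atTop (by positivity))
    simpa using (h1.neg).mul_const (Real.exp (-(γ * σ2 * z ^ α) / (lamGB * P_GB)))
  have hB : IsBoundedUnder (· ≤ ·) atTop ((fun x => ‖x‖) ∘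
      fun P => Real.exp (b P) * ∫ u in Set.Iio (-(b P)), Real.exp u / u) := by
    refine isBoundedUnder_of_eventually_le (a := 1 / (k * σ2 * y ^ α)) ?_
    filter_upwards [eventually_gt_atTop 0] with P hP
    have hc : 0 < k * σ2 * y ^ α := by positivity
    have hbc : k * σ2 * y ^ α ≤ b P := by
      rw [hb, hΨ', le_div_iff₀ hP]
      have : 0 < 1 / lamGF * σ2 * y ^ α := by positivity
      nlinarith
    exact (ei_aux _ (hc.trans_le hbc)).trans (one_div_le_one_div_of_le hc hbc)
  have := hA.zero_mul_isBoundedUnder_le hB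
  simpa only [mul_assoc] using this
end

section
/- Let P_GF, P_GB, σ², α, y, z, λ_GF, λ_GB > 0, let H_GF, H_GB be independent exponential random variables with means λ_GF and λ_GB, and set g_GF = P_GF·H_GF·y^{-α}, g_GB = P_GB·H_GB·z^{-α}. For 0 < t < 1, set c_t = t·σ²·y^α/((1-t)·P_GF), Ψ(t) = P_GF·y^{-α}·t·z^α/(λ_GB·P_GB) + 1/λ_GF, and k = P_GF·z^α/(λ_GB·P_GB·y^α). Then the joint coverage probability of the GB user under the dynamic protocol satisfies P( g_GB > t·(g_GF + σ²) and g_GF < g_GB ) = exp( -t·σ²·z^α/(λ_GB·P_GB) )·(1 - e^{-Ψ(t)·c_t})/(λ_GF·Ψ(t)) + exp( -(k + 1/λ_GF)·c_t )/( 1 + λ_GF·k ). -/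
open MeasureTheory ProbabilityTheory Real Set

/-- A random variable with exponential tail has law `expMeasure`. -/
lemma law_of_exp_tail {Ω : Type*} [MeasurableSpace Ω] (μ : Measure Ω) [IsProbabilityMeasure μ]
    (l : ℝ) (hl : 0 < l) (X : Ω → ℝ) (hX : Measurable X)
    (h : ∀ s : ℝ, 0 ≤ s → (μ {ω | s < X ω}).toReal = Real.exp (-s / l)) :
    μ.map X = expMeasure (1 / l) := by
  have hr : 0 < 1 / l := by positivity
  have := isProbabilityMeasure_expMeasure hr
  have : IsProbabilityMeasure (μ.map X) := Measure.isProbabilityMeasure_map hX.aemeasurable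
  have key : ∀ x : ℝ, 0 ≤ x → cdf (μ.map X) x = 1 - Real.exp (-x / l) := by
    intro x hx
    rw [cdf_eq_real, map_measureReal_apply hX measurableSet_Iic, ← h x hx]
    have hc : X ⁻¹' Iic x = {ω | x < X ω}ᶜ := by
      ext ω; simp
    rw [hc, measureReal_compl (measurableSet_lt measurable_const hX)]
    simp [measureReal_def]
  apply Measure.eq_of_cdf
  ext x
  rw [cdf_expMeasure_eq hr]
  split_ifs with hx
  · rw [key x hx]
    congr 2
    ring
  · have h0 := key 0 le_rfl
    have h1 := (monotone_cdf (μ.map X)) (le_of_not_ge hx)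
    have h2 := cdf_nonneg (μ.map X) x
    simp only [neg_zero, zero_div, Real.exp_zero, sub_self] at h0
    linarith

lemma integral_against_exp (r : ℝ) (hr : 0 < r) (f : ℝ → ℝ) :
    ∫ x, f x ∂(expMeasure r) = ∫ x in Ioi 0, r * Real.exp (-(r * x)) * f x := by
  have hm : Measurable (gammaPDF 1 r) := (measurable_gammaPDFReal 1 r).ennreal_ofReal
  rw [expMeasure, gammaMeasure, integral_withDensity_eq_integral_toReal_smul hm
    (Filter.Eventually.of_forall fun x => ENNReal.ofReal_lt_top),
    ← integral_Ici_eq_integral_Ioi, ← integral_indicator measurableSet_Ici]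
  congr 1
  ext x
  have : gammaPDF 1 r x = exponentialPDF r x := rfl
  rw [this, exponentialPDF_eq]
  by_cases hx : 0 ≤ x
  · have : 0 ≤ r * Real.exp (-(r * x)) := by positivity
    simp [hx, this]
  · simp [hx]

lemma prob_gt_eq_integral {Ω : Type*} [MeasurableSpace Ω] (μ : Measure Ω) [IsProbabilityMeasure μ]
    (l m : ℝ) (hl : 0 < l) (X Y : Ω → ℝ) (hX : Measurable X) (hY : Measurable Y)
    (hind : IndepFun X Y μ)
    (hXe : ∀ s : ℝ, 0 ≤ s → (μ {ω | s < X ω}).toReal = Real.exp (-s / l))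
    (hYe : ∀ s : ℝ, 0 ≤ s → (μ {ω | s < Y ω}).toReal = Real.exp (-s / m))
    (G : ℝ → ℝ) (hG : Measurable G) (hG0 : ∀ x, 0 < x → 0 ≤ G x) :
    (μ {ω | G (X ω) < Y ω}).toReal =
      ∫ x in Ioi 0, 1 / l * Real.exp (-(1 / l * x)) * Real.exp (-(G x) / m) := by
  have hr : 0 < 1 / l := by positivity
  have : IsProbabilityMeasure (μ.map Y) := Measure.isProbabilityMeasure_map hY.aemeasurable
  have : IsProbabilityMeasure (μ.map X) := Measure.isProbabilityMeasure_map hX.aemeasurable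
  have hS : MeasurableSet {p : ℝ × ℝ | G p.1 < p.2} :=
    measurableSet_lt (hG.comp measurable_fst) measurable_snd
  have hpair := (indepFun_iff_map_prod_eq_prod_map_map hX.aemeasurable hY.aemeasurable).1 hind
  have e1 : μ {ω | G (X ω) < Y ω} = ((μ.map X).prod (μ.map Y)) {p : ℝ × ℝ | G p.1 < p.2} := by
    rw [← hpair, Measure.map_apply (hX.prodMk hY) hS]
    rfl
  rw [e1, Measure.prod_apply hS, ← integral_toReal
    (measurable_measure_prodMk_left hS).aemeasurable
    (Filter.Eventually.of_forall fun x => measure_lt_top _ _),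
    law_of_exp_tail μ l hl X hX hXe, integral_against_exp _ hr]
  refine setIntegral_congr_fun measurableSet_Ioi fun x hx => ?_
  have := hYe (G x) (hG0 x hx)
  rw [← this, Measure.map_apply hY (measurable_prodMk_left hS)]
  rfl

lemma integral_two_pieces (a b c C D : ℝ) (ha : 0 < a) (hb : 0 < b) (hc : 0 ≤ c) (f : ℝ → ℝ)
    (h1 : ∀ x, 0 < x → x ≤ c → f x = C * Real.exp (-a * x))
    (h2 : ∀ x, c < x → f x = D * Real.exp (-b * x)) :
    ∫ x in Ioi 0, f x = C * (1 - Real.exp (-(a * c))) / a + D * Real.exp (-(b * c)) / b := by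
  have iA : ∀ d, IntegrableOn (fun x => C * Real.exp (-a * x)) (Ioi d) := fun d =>
    (integrableOn_exp_mul_Ioi (by linarith) d).const_mul C
  have iB : IntegrableOn (fun x => D * Real.exp (-b * x)) (Ioi c) :=
    (integrableOn_exp_mul_Ioi (by linarith) c).const_mul D
  have iA' : IntegrableOn (fun x => C * Real.exp (-a * x)) (Ioc 0 c) :=
    (iA 0).mono_set Ioc_subset_Ioi_self
  have e1 : EqOn f (fun x => C * Real.exp (-a * x)) (Ioc 0 c) := fun x hx => h1 x hx.1 hx.2
  have e2 : EqOn f (fun x => D * Real.exp (-b * x)) (Ioi c) := fun x hx => h2 x hx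
  have hd : Disjoint (Ioc 0 c) (Ioi c) := Ioc_disjoint_Ioi le_rfl
  rw [← Ioc_union_Ioi_eq_Ioi hc, setIntegral_union hd measurableSet_Ioi
    ((integrableOn_congr_fun e1 measurableSet_Ioc).2 iA')
    ((integrableOn_congr_fun e2 measurableSet_Ioi).2 iB),
    setIntegral_congr_fun measurableSet_Ioc e1, setIntegral_congr_fun measurableSet_Ioi e2]
  have hs := setIntegral_union hd measurableSet_Ioi iA' (iA c)
  rw [Ioc_union_Ioi_eq_Ioi hc] at hs
  simp only [integral_const_mul, integral_exp_mul_Ioi (show -a < 0 by linarith),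
    integral_exp_mul_Ioi (show -b < 0 by linarith)] at hs ⊢
  have hs' : C * ∫ x in Ioc 0 c, Real.exp (-a * x) =
      C * (-Real.exp (-a * 0) / -a) - C * (-Real.exp (-a * c) / -a) := by linarith
  rw [hs']
  simp only [mul_zero, Real.exp_zero, neg_mul]
  field_simp

/-- Exact conditional joint coverage probability of the GB user under the dynamic
protocol in the regime `γ_GB^{th} = t ∈ (0,1)` (Lemma 2, Appendix B): with independent
exponential channel gains `H_GF, H_GB` (means `lamGF, lamGB`), `g_GF = P_GF·H_GF·y⁻ᵅ`,
`g_GB = P_GB·H_GB·z⁻ᵅ`, `c_t = t·σ²·yᵅ/((1-t)·P_GF)`,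
`Ψ(t) = P_GF·y⁻ᵅ·t·zᵅ/(lamGB·P_GB) + 1/lamGF` and `k = P_GF·zᵅ/(lamGB·P_GB·yᵅ)`,
`P(g_GB > t·(g_GF + σ²) ∧ g_GF < g_GB)
  = exp(-t·σ²·zᵅ/(lamGB·P_GB))·(1 - e^{-Ψ(t)·c_t})/(lamGF·Ψ(t))
    + exp(-(k + 1/lamGF)·c_t)/(1 + lamGF·k)`. -/
theorem gb_joint_coverage_dynamic_protocol
    {Ω : Type*} [MeasurableSpace Ω] (μ : Measure Ω) [IsProbabilityMeasure μ]
    (P_GF P_GB σ2 α y z lamGF lamGB : ℝ)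
    (hPGF : 0 < P_GF) (hPGB : 0 < P_GB) (hσ2 : 0 < σ2) (hα : 0 < α)
    (hy : 0 < y) (hz : 0 < z) (hlamGF : 0 < lamGF) (hlamGB : 0 < lamGB)
    (H_GF H_GB : Ω → ℝ) (hmGF : Measurable H_GF) (hmGB : Measurable H_GB)
    (hind : IndepFun H_GF H_GB μ)
    (hGFexp : ∀ s : ℝ, 0 ≤ s → (μ {ω | s < H_GF ω}).toReal = Real.exp (-s / lamGF))
    (hGBexp : ∀ s : ℝ, 0 ≤ s → (μ {ω | s < H_GB ω}).toReal = Real.exp (-s / lamGB))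
    (t : ℝ) (ht0 : 0 < t) (ht1 : t < 1)
    (c_t : ℝ) (hct : c_t = t * σ2 * y ^ α / ((1 - t) * P_GF))
    (Ψ : ℝ → ℝ) (hΨ : ∀ u, Ψ u = P_GF * y ^ (-α) * u * z ^ α / (lamGB * P_GB) + 1 / lamGF)
    (k : ℝ) (hk : k = P_GF * z ^ α / (lamGB * P_GB * y ^ α)) :
    (μ {ω | t * (P_GF * H_GF ω * y ^ (-α) + σ2) < P_GB * H_GB ω * z ^ (-α)
          ∧ P_GF * H_GF ω * y ^ (-α) < P_GB * H_GB ω * z ^ (-α)}).toReal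
      = Real.exp (-(t * σ2 * z ^ α) / (lamGB * P_GB)) *
          (1 - Real.exp (-(Ψ t * c_t))) / (lamGF * Ψ t)
        + Real.exp (-((k + 1 / lamGF) * c_t)) / (1 + lamGF * k) := by
  have hYp : 0 < y ^ α := rpow_pos_of_pos hy α
  have hZp : 0 < z ^ α := rpow_pos_of_pos hz α
  have hΨt := hΨ t
  rw [rpow_neg hy.le] at hΨt
  rw [rpow_neg hy.le, rpow_neg hz.le]
  generalize Ψ t = p at *
  generalize y ^ α = Y at *
  generalize z ^ α = Z at *
  have h1t : 0 < 1 - t := by linarith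
  have hc0 : 0 < c_t := by rw [hct]; positivity
  have hk0 : 0 < k := by rw [hk]; positivity
  have hp0 : 0 < p := by rw [hΨt]; positivity
  have hset : {ω | t * (P_GF * H_GF ω * Y⁻¹ + σ2) < P_GB * H_GB ω * Z⁻¹
          ∧ P_GF * H_GF ω * Y⁻¹ < P_GB * H_GB ω * Z⁻¹}
      = {ω | (fun x => max (t * (P_GF * x * Y⁻¹ + σ2)) (P_GF * x * Y⁻¹) * (Z / P_GB)) (H_GF ω)
          < H_GB ω} := by
    ext ω
    simp only [mem_ofPred_eq]
    have e : P_GB * H_GB ω * Z⁻¹ = H_GB ω / (Z / P_GB) := by field_simp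
    rw [← max_lt_iff, e, lt_div_iff₀ (by positivity)]
  rw [hset, prob_gt_eq_integral μ lamGF lamGB hlamGF H_GF H_GB hmGF hmGB hind hGFexp hGBexp
    (fun x => max (t * (P_GF * x * Y⁻¹ + σ2)) (P_GF * x * Y⁻¹) * (Z / P_GB)) (by fun_prop)
    (fun x hx => by
      have : 0 ≤ P_GF * x * Y⁻¹ := by positivity
      exact mul_nonneg (le_max_of_le_right this) (by positivity)),
    integral_two_pieces p (k + 1 / lamGF) c_t
      (1 / lamGF * Real.exp (-(t * σ2 * Z) / (lamGB * P_GB))) (1 / lamGF) hp0 (by positivity) hc0.le]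
  · congr 1
    · field_simp
    · field_simp
      ring
  · intro x hx hxc
    have hm : P_GF * x * Y⁻¹ ≤ t * (P_GF * x * Y⁻¹ + σ2) := by
      have h3 : x * ((1 - t) * P_GF) ≤ t * σ2 * Y := by
        rwa [hct, le_div_iff₀ (by positivity)] at hxc
      have h4 : P_GF * x * Y⁻¹ * (1 - t) ≤ t * σ2 := by
        have e : P_GF * x * Y⁻¹ * (1 - t) = x * ((1 - t) * P_GF) / Y := by field_simp
        rw [e, div_le_iff₀ hYp]
        exact h3
      linarith
    simp only [max_eq_left hm]
    rw [mul_assoc (1 / lamGF) (Real.exp _), mul_assoc (1 / lamGF) (Real.exp _), ← Real.exp_add, ← Real.exp_add, hΨt]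
    congr 2
    field_simp
    ring
  · intro x hxc
    have hm : t * (P_GF * x * Y⁻¹ + σ2) ≤ P_GF * x * Y⁻¹ := by
      have h3 : t * σ2 * Y ≤ x * ((1 - t) * P_GF) := by
        have := hxc.le
        rwa [hct, div_le_iff₀ (by positivity)] at this
      have h4 : t * σ2 ≤ P_GF * x * Y⁻¹ * (1 - t) := by
        have e : P_GF * x * Y⁻¹ * (1 - t) = x * ((1 - t) * P_GF) / Y := by field_simp
        rw [e, le_div_iff₀ hYp]
        exact h3
      linarith
    simp only [max_eq_right hm]
    rw [mul_assoc, ← Real.exp_add, hk]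
    congr 2
    field_simp
    ring
end
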